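/- arXiv:2101.08648 — 2 statements merged into one kernel-verified Lean document; each statement's English description precedes it below -/
import Mathlib

section
/- Let p_j denote the j-th prime. For every j ≥ 10 (i.e., whenever p_j ≥ 29), the prime gap satisfies p_{j+1} − p_j < (1/5)·p_j; equivalently, for every prime p ≥ 29 there is a prime q with p < q < (6/5)·p. -/
open Classical

noncomputable section

namespace Formal

variable {V : Type*} [Fintype V] [DecidableEq V]

/-- The real adjacency matrix of a finite simple graph. -/
def adjMat (G : SimpleGraph V) : Matrix V V ℝ :=
  letI := Classical.decRel G.Adj
  SimpleGraph.adjMatrix ℝ G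

lemma adjMat_isHermitian (G : SimpleGraph V) : (adjMat G).IsHermitian := by
  letI := Classical.decRel G.Adj
  unfold adjMat
  rw [Matrix.IsHermitian, Matrix.conjTranspose_eq_transpose_of_trivial]
  exact SimpleGraph.isSymm_adjMatrix G

/-- `G` is `k`-regular: every vertex has exactly `k` neighbours. -/
def IsRegular (G : SimpleGraph V) (k : ℕ) : Prop :=
  ∀ v : V, (G.neighborSet v).ncard = k

/-- The eigenvalues (with multiplicity) of the adjacency matrix, indexed by vertices. -/
def eigs (G : SimpleGraph V) : V → ℝ :=
  (adjMat_isHermitian G).eigenvalues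

/-- The absolute values of the adjacency eigenvalues, sorted in increasing order. -/
def sortedAbsEigs (G : SimpleGraph V) : List ℝ :=
  (Finset.univ.val.map fun i => |eigs G i|).sort (· ≤ ·)

/-- `λ(G)`: the second largest absolute value of an eigenvalue (with multiplicity). -/
def secondLargestAbsEig (G : SimpleGraph V) : ℝ :=
  (sortedAbsEigs G).getD (Fintype.card V - 2) 0

/-- `λ₃(G)`: the third largest absolute value of an eigenvalue (with multiplicity). -/
def thirdLargestAbsEig (G : SimpleGraph V) : ℝ :=
  (sortedAbsEigs G).getD (Fintype.card V - 3) 0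

/-- `μ` has a `(k, ε)`-localized (ℓ²-normalized) eigenvector for `A(G)`. -/
def HasLocalizedEigenvector (G : SimpleGraph V) (μ : ℝ) (k : ℕ) (ε : ℝ) : Prop :=
  ∃ v : V → ℝ, (adjMat G).mulVec v = μ • v ∧ (∑ x, (v x) ^ 2) = 1 ∧
    ∃ S : Finset V, S.card = k ∧ ε ≤ ∑ x ∈ S, (v x) ^ 2

/-- There are `r` distinct eigenvalues of `A(G)`, each with a `(k, ε)`-localized
eigenvector for some `k ≤ bound`. -/
def LocalizedSpectrum (G : SimpleGraph V) (r : ℕ) (ε bound : ℝ) : Prop :=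
  ∃ Λ : Finset ℝ, Λ.card = r ∧
    ∀ μ ∈ Λ, ∃ k : ℕ, (k : ℝ) ≤ bound ∧ HasLocalizedEigenvector G μ k ε

/-- `girth(G) ≥ x` for a real number `x` (`girth = ⊤` counts as `≥ x`). -/
def girthGe {W : Type*} (G : SimpleGraph W) (x : ℝ) : Prop :=
  ∀ g : ℕ, G.girth = g → x ≤ g

/-- `girth(G) > x` for a real number `x` (`girth = ⊤` counts as `> x`). -/
def girthGt {W : Type*} (G : SimpleGraph W) (x : ℝ) : Prop :=
  ∀ g : ℕ, G.girth = g → x < g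

/-- The `j`-th prime, so `nthPrime 1 = 2`, `nthPrime 2 = 3`, ..., `nthPrime 10 = 29`. -/
def nthPrime (j : ℕ) : ℕ :=
  Nat.nth Nat.Prime (j - 1)

/-!
Nagura's argument. The von Mangoldt function `Λ` turns `log ⌊x⌋!` into `∑ d ≤ x, Λ d * ⌊x / d⌋`, so
in Chebyshev's combination
`E x = log ⌊x⌋! - log ⌊x/2⌋! - log ⌊x/3⌋! - log ⌊x/5⌋! + log ⌊x/30⌋!`
the value `Λ d` has a weight depending only on `⌊x / d⌋`, namely `0` or `1`. This squeezes `E x`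
between combinations of values of `ψ`, while Stirling's formula gives `E x ≈ A * x` with
`A = 0.9212...`.

Chebyshev's own `ψ x - ψ (x/6) ≤ E x ≤ ψ x` only bounds `ψ x / x` asymptotically between `A` and
`(6/5) * A`, which just fails to separate `θ ((6/5) * x)` from `θ x`. The sharper
`ψ x - ψ (x/6) + ψ (x/7) - ψ (x/10) ≤ E x` improves the upper constant to `(90/77) * A`, and
`90/77 < 6/5`. As `ψ - θ` is `O(√x)`, this settles all large `x`; a chain of primes with successive
ratios below `6/5` covers the rest.
-/

section Nagura

open Finset Real
open scoped Nat ArithmeticFunction.vonMangoldt Chebyshev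

-- Convexity of `t ↦ t * log t - t`, whose derivative is `log`.
lemma sub_mul_log_le {a b : ℝ} (ha : 0 < a) (hb : 0 < b) :
    (b - a) * log a ≤ (b * log b - b) - (a * log a - a) := by
  have h := mul_le_mul_of_nonneg_left (one_sub_inv_le_log_of_pos (div_pos hb ha)) hb.le
  rw [log_div hb.ne' ha.ne', inv_div, mul_sub, mul_div_cancel₀ a hb.ne'] at h
  linarith

lemma mul_log_sub_add_one_le_log_factorial {n : ℕ} (hn : 1 ≤ n) :
    n * log n - n + 1 ≤ log n ! := by
  induction n, hn using Nat.le_induction with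
  | base => simp
  | succ n hn ih =>
    have h := sub_mul_log_le (a := n + 1) (b := n) (by positivity) (by positivity)
    rw [Nat.factorial_succ, Nat.cast_mul, log_mul (by positivity) (by positivity)]
    push_cast
    linarith

lemma log_factorial_le_mul_log_sub_add_one_add_log {n : ℕ} (hn : 1 ≤ n) :
    log n ! ≤ n * log n - n + 1 + log n := by
  induction n, hn using Nat.le_induction with
  | base => simp
  | succ n hn ih =>
    have h := sub_mul_log_le (a := n) (b := n + 1) (by positivity) (by positivity)
    rw [Nat.factorial_succ, Nat.cast_mul, log_mul (by positivity) (by positivity)]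
    push_cast
    linarith

lemma abs_log_factorial_floor_sub_le {x : ℝ} (hx : 1 ≤ x) :
    |log ⌊x⌋₊ ! - (x * log x - x + 1)| ≤ log x := by
  have hm : 1 ≤ ⌊x⌋₊ := Nat.one_le_floor_iff x |>.2 hx
  have hm1 : (1 : ℝ) ≤ ⌊x⌋₊ := by exact_mod_cast hm
  have hmx : (⌊x⌋₊ : ℝ) ≤ x := Nat.floor_le (by positivity)
  have hxm : x ≤ ⌊x⌋₊ + 1 := (Nat.lt_floor_add_one x).le
  have hlower := mul_log_sub_add_one_le_log_factorial hm
  have hupper := log_factorial_le_mul_log_sub_add_one_add_log hm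
  have hgrowth_le := sub_mul_log_le (a := x) (b := ⌊x⌋₊) (by positivity) (by positivity)
  have hgrowth_ge := sub_mul_log_le (a := ⌊x⌋₊) (b := x) (by positivity) (by positivity)
  have hlog : log ⌊x⌋₊ ≤ log x := log_le_log (by positivity) hmx
  have hstep_le : (x - ⌊x⌋₊) * log x ≤ log x :=
    mul_le_of_le_one_left (log_nonneg hx) (by linarith)
  have hstep_ge : 0 ≤ (x - ⌊x⌋₊) * log ⌊x⌋₊ :=
    mul_nonneg (by linarith) (log_nonneg hm1)
  rw [abs_le]
  constructor <;> linarith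

/-- The sum `∑ d ≤ x, Λ d * f ⌊x / d⌋`, the common shape of `ψ (x / k)` and `log ⌊x / k⌋!`. -/
def vonMangoldtFloorSum (f : ℕ → ℕ) (x : ℝ) : ℝ :=
  ∑ d ∈ Ioc 0 ⌊x⌋₊, Λ d * f ⌊x / d⌋₊

lemma vonMangoldtFloorSum_mono {f g : ℕ → ℕ} (hfg : f ≤ g) (x : ℝ) :
    vonMangoldtFloorSum f x ≤ vonMangoldtFloorSum g x :=
  sum_le_sum fun _ _ ↦ mul_le_mul_of_nonneg_left (by exact_mod_cast hfg _)
    ArithmeticFunction.vonMangoldt_nonneg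

lemma vonMangoldtFloorSum_add (f g : ℕ → ℕ) (x : ℝ) :
    vonMangoldtFloorSum (f + g) x = vonMangoldtFloorSum f x + vonMangoldtFloorSum g x := by
  simp [vonMangoldtFloorSum, mul_add, sum_add_distrib]

lemma vonMangoldtFloorSum_div {f : ℕ → ℕ} (hf : f 0 = 0) (x : ℝ) (k : ℕ) :
    vonMangoldtFloorSum f (x / k) = vonMangoldtFloorSum (fun m ↦ f (m / k)) x := by
  simp only [vonMangoldtFloorSum, Nat.floor_div_natCast]
  have hsub : Ioc 0 (⌊x⌋₊ / k) ⊆ Ioc 0 ⌊x⌋₊ := Ioc_subset_Ioc_right (Nat.div_le_self _ _)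
  refine (sum_congr rfl fun d _ ↦ by rw [Nat.div_right_comm]).trans
    (sum_subset hsub fun d hd hd' ↦ ?_)
  have hlt : ⌊x⌋₊ / k < d := by
    simp only [mem_Ioc] at hd hd'
    lia
  rw [Nat.div_right_comm, Nat.div_eq_of_lt hlt, hf, Nat.cast_zero, mul_zero]

lemma vonMangoldtFloorSum_min_one (x : ℝ) : vonMangoldtFloorSum (min · 1) x = ψ x := by
  refine sum_congr rfl fun d hd ↦ ?_
  obtain ⟨hd0, hdx⟩ := mem_Ioc.1 hd
  have : 1 ≤ ⌊x⌋₊ / d := (Nat.one_le_div_iff hd0).2 hdx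
  simp [Nat.floor_div_natCast, this]

lemma vonMangoldtFloorSum_id (x : ℝ) : vonMangoldtFloorSum id x = log ⌊x⌋₊ ! := by
  simp only [vonMangoldtFloorSum, Nat.floor_div_natCast, id]
  rw [← ArithmeticFunction.sum_Ioc_mul_zeta_eq_sum, ArithmeticFunction.vonMangoldt_mul_zeta]
  induction ⌊x⌋₊ with
  | zero => simp
  | succ n ih =>
    rw [Nat.factorial_succ, Nat.cast_mul, log_mul (by positivity) (by positivity),
      sum_Ioc_succ_top n.zero_le, ih, ArithmeticFunction.log_apply, add_comm]

lemma psi_div_eq_vonMangoldtFloorSum (x : ℝ) (k : ℕ) :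
    ψ (x / k) = vonMangoldtFloorSum (fun m ↦ min (m / k) 1) x := by
  rw [← vonMangoldtFloorSum_min_one, vonMangoldtFloorSum_div (Nat.zero_min 1)]

lemma log_factorial_floor_div_eq_vonMangoldtFloorSum (x : ℝ) (k : ℕ) :
    log ⌊x / k⌋₊ ! = vonMangoldtFloorSum (fun m ↦ m / k) x := by
  rw [← vonMangoldtFloorSum_id, vonMangoldtFloorSum_div rfl]
  rfl

/-- The logarithm of Chebyshev's quotient `⌊x⌋! ⌊x/30⌋! / (⌊x/2⌋! ⌊x/3⌋! ⌊x/5⌋!)`. -/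
def chebyshevLog (x : ℝ) : ℝ :=
  log ⌊x⌋₊ ! + log ⌊x / 30⌋₊ ! - (log ⌊x / 2⌋₊ ! + log ⌊x / 3⌋₊ ! + log ⌊x / 5⌋₊ !)

lemma chebyshevLog_le_psi (x : ℝ) : chebyshevLog x ≤ ψ x := by
  have h := vonMangoldtFloorSum_mono (f := id + (· / 30))
    (g := (min · 1) + (· / 2) + (· / 3) + (· / 5))
    (fun m ↦ by simp only [Pi.add_apply, id]; lia) x
  simp only [vonMangoldtFloorSum_add, vonMangoldtFloorSum_id, vonMangoldtFloorSum_min_one,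
    ← log_factorial_floor_div_eq_vonMangoldtFloorSum, Nat.cast_ofNat] at h
  unfold chebyshevLog
  linarith

lemma psi_add_psi_div_seven_le (x : ℝ) :
    ψ x + ψ (x / 7) ≤ chebyshevLog x + ψ (x / 6) + ψ (x / 10) := by
  have h := vonMangoldtFloorSum_mono
    (f := (min · 1) + (fun m ↦ min (m / 7) 1) + (· / 2) + (· / 3) + (· / 5))
    (g := id + (· / 30) + (fun m ↦ min (m / 6) 1) + (fun m ↦ min (m / 10) 1))
    (fun m ↦ by simp only [Pi.add_apply, id]; lia) x
  simp only [vonMangoldtFloorSum_add, vonMangoldtFloorSum_id, vonMangoldtFloorSum_min_one,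
    ← log_factorial_floor_div_eq_vonMangoldtFloorSum, ← psi_div_eq_vonMangoldtFloorSum,
    Nat.cast_ofNat] at h
  unfold chebyshevLog
  linarith

/-- Chebyshev's constant `A = log (2^(1/2) * 3^(1/3) * 5^(1/5) / 30^(1/30))`, the slope of
`chebyshevLog`. -/
def chebyshevConst : ℝ :=
  log 2 / 2 + log 3 / 3 + log 5 / 5 - log 30 / 30

lemma chebyshevConst_mem_Ioo : chebyshevConst ∈ Set.Ioo 0.921 0.922 := by
  have h30 : log 30 = log 2 + log 3 + log 5 := by
    rw [← log_mul (by norm_num) (by norm_num), ← log_mul (by norm_num) (by norm_num)]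
    norm_num
  rw [chebyshevConst, h30]
  constructor <;> linarith [log_two_gt_d9, log_two_lt_d9, log_three_gt_d9, log_three_lt_d9,
    log_five_gt_d9, log_five_lt_d9]

lemma abs_chebyshevLog_sub_le {x : ℝ} (hx : 30 ≤ x) :
    |chebyshevLog x - (chebyshevConst * x - 1)| ≤ 5 * log x := by
  have stirling {k : ℝ} (hk : 1 ≤ k) (hkx : k ≤ x) :
      |log ⌊x / k⌋₊ ! - (x / k * (log x - log k) - x / k + 1)| ≤ log x := by
    have hk0 : 0 < k := by linarith
    rw [← log_div (by linarith) hk0.ne']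
    exact (abs_log_factorial_floor_sub_le ((one_le_div hk0).2 hkx)).trans
      (log_le_log (by positivity) (div_le_self (by linarith) hk))
  have h1 := abs_le.1 (abs_log_factorial_floor_sub_le (x := x) (by linarith))
  have h2 := abs_le.1 (stirling (k := 2) (by norm_num) (by linarith))
  have h3 := abs_le.1 (stirling (k := 3) (by norm_num) (by linarith))
  have h5 := abs_le.1 (stirling (k := 5) (by norm_num) (by linarith))
  have h30 := abs_le.1 (stirling (k := 30) (by norm_num) hx)
  rw [abs_le, chebyshevLog, chebyshevConst]
  constructor <;> linarith

lemma log_le_sqrt {x : ℝ} (hx : 0 ≤ x) : log x ≤ √x := by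
  rcases hx.eq_or_lt with rfl | hx
  · simp
  have h := log_le_sub_one_of_pos (half_pos (sqrt_pos.2 hx))
  rw [log_div (sqrt_pos.2 hx).ne' two_ne_zero, log_sqrt hx.le] at h
  linarith [log_two_lt_d9]

lemma le_psi {x : ℝ} (hx : 0 ≤ x) : 0.921 * x - 1 - 5 * √x ≤ ψ x := by
  rcases le_or_gt 30 x with hx30 | hx30
  · have hE := (abs_le.1 (abs_chebyshevLog_sub_le hx30)).1
    have hA := mul_le_mul_of_nonneg_right chebyshevConst_mem_Ioo.1.le hx
    linarith [log_le_sqrt hx, chebyshevLog_le_psi x]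
  · have hs : √x ≤ 5.5 := sqrt_le_iff.2 ⟨by norm_num, by linarith⟩
    nlinarith [sq_sqrt hx, sqrt_nonneg x, Chebyshev.psi_nonneg x]

lemma log_four_add_four_lt : log 4 + 4 < 5.4 := by
  have : log 4 = 2 * log 2 := by
    rw [show (4 : ℝ) = 2 ^ 2 by norm_num, log_pow, Nat.cast_ofNat]
  linarith [log_two_lt_d9]

lemma sqrt_div_le_mul_sqrt {x k c : ℝ} (hc : 0 ≤ c) (hkc : 1 ≤ k * c ^ 2) :
    √(x / k) ≤ c * √x := by
  have hk : 0 < k := by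
    by_contra! hk
    nlinarith [sq_nonneg c]
  rw [sqrt_div' x hk.le, div_eq_inv_mul]
  refine mul_le_mul_of_nonneg_right ?_ (sqrt_nonneg x)
  rw [← sqrt_inv, sqrt_le_left hc]
  rwa [inv_le_iff_one_le_mul₀' hk]

-- Strong induction closes with `c * x + C * √x` as soon as `c * (1 - 1/6 - 1/10) ≥ 0.922 - 0.921/7`
-- and `C * (1 - 1/√6 - 1/√10) ≥ 5 + 5/√7`.
lemma psi_le {x : ℝ} (hx : 0 ≤ x) : ψ x ≤ 1.078 * x + 26 * √x := by
  induction hn : ⌊x⌋₊ using Nat.strong_induction_on generalizing x with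
  | _ n ih =>
    subst hn
    rcases le_or_gt 30 x with hx30 | hx30
    · have hfloor : 30 ≤ ⌊x⌋₊ := Nat.le_floor (by exact_mod_cast hx30)
      have h6 := ih _ (by rw [Nat.floor_div_ofNat]; lia) (x := x / 6) (by positivity) rfl
      have h10 := ih _ (by rw [Nat.floor_div_ofNat]; lia) (x := x / 10) (by positivity) rfl
      have h7 := le_psi (x := x / 7) (by positivity)
      have s6 := sqrt_div_le_mul_sqrt (x := x) (k := 6) (c := 0.409)
        (by norm_num) (by norm_num)
      have s7 := sqrt_div_le_mul_sqrt (x := x) (k := 7) (c := 0.379)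
        (by norm_num) (by norm_num)
      have s10 := sqrt_div_le_mul_sqrt (x := x) (k := 10) (c := 0.317)
        (by norm_num) (by norm_num)
      have hE := (abs_le.1 (abs_chebyshevLog_sub_le hx30)).2
      have hA := mul_le_mul_of_nonneg_right chebyshevConst_mem_Ioo.2.le hx
      linarith [psi_add_psi_div_seven_le x, log_le_sqrt hx, sqrt_nonneg x]
    · have hs : √x ≤ 5.5 := sqrt_le_iff.2 ⟨by norm_num, by linarith⟩
      have h := Chebyshev.psi_le_const_mul_self hx
      nlinarith [log_four_add_four_lt, sq_sqrt hx, sqrt_nonneg x]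

lemma psi_sub_theta_le_mul_sqrt {x : ℝ} (hx : 1 ≤ x) : ψ x - θ x ≤ 16.2 * √x := by
  have hpow {r : ℝ} (hr : 2 ≤ r) : ψ (x ^ r⁻¹) ≤ 5.4 * √x := by
    calc ψ (x ^ r⁻¹) ≤ ψ √x := by
          rw [sqrt_eq_rpow, one_div]
          exact Chebyshev.psi_mono (by gcongr)
      _ ≤ (log 4 + 4) * √x := Chebyshev.psi_le_const_mul_self (sqrt_nonneg x)
      _ ≤ 5.4 * √x := by gcongr; exact log_four_add_four_lt.le
  linarith [Chebyshev.psi_sub_theta_le_psi_add_psi_add_psi x, hpow le_rfl,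
    hpow (r := 3) (by norm_num), hpow (r := 5) (by norm_num)]

lemma exists_prime_of_theta_lt {x y : ℝ} (h : θ x < θ y) :
    ∃ p : ℕ, p.Prime ∧ x < p ∧ p ≤ y := by
  by_contra! hno
  refine h.not_ge (sum_le_sum_of_subset_of_nonneg (fun p hp ↦ ?_) fun p _ _ ↦ log_natCast_nonneg p)
  simp only [mem_filter, mem_Ioc] at hp ⊢
  obtain ⟨⟨hp0, hpy⟩, hprime⟩ := hp
  have hpx : (p : ℝ) ≤ x := by
    by_contra! hxp
    exact (hno p hprime hxp).not_ge ((Nat.le_floor_iff' hp0.ne').1 hpy)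
  exact ⟨⟨hp0, Nat.le_floor hpx⟩, hprime⟩

lemma exists_prime_lt_six_fifths_of_large {x : ℝ} (hx : 4000000 ≤ x) :
    ∃ q : ℕ, q.Prime ∧ x < q ∧ q < 6 / 5 * x := by
  have hx0 : 0 ≤ x := by linarith
  have hs : 2000 ≤ √x := le_sqrt_of_sq_le (by linarith)
  have hsy : √(1.199 * x) ≤ 1.1 * √x := by
    rw [sqrt_mul (by norm_num)]
    exact mul_le_mul_of_nonneg_right (sqrt_le_iff.2 (by norm_num)) (sqrt_nonneg x)
  have hθ : θ x < θ (1.199 * x) := by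
    nlinarith [le_psi (x := 1.199 * x) (by linarith), psi_le hx0, sq_sqrt hx0,
      psi_sub_theta_le_mul_sqrt (x := 1.199 * x) (by linarith), Chebyshev.theta_le_psi x]
  obtain ⟨q, hq, hxq, hqx⟩ := exists_prime_of_theta_lt hθ
  exact ⟨q, hq, hxq, by linarith⟩

lemma exists_rel_le_lt_of_isChain {α : Type*} [LinearOrder α] {r : α → α → Prop} {a b n : α}
    {l : List α} (hl : (a :: l).IsChain r) (han : a ≤ n) (hb : b ∈ l) (hnb : n < b) :
    ∃ p q, r p q ∧ p ≤ n ∧ n < q := by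
  induction l generalizing a with
  | nil => simp at hb
  | cons c l ih =>
    rw [List.isChain_cons_cons] at hl
    rcases lt_or_ge n c with hnc | hcn
    · exact ⟨a, c, hl.1, han, hnc⟩
    · exact ih hl.2 hcn ((List.mem_cons.1 hb).resolve_left (hcn.trans_lt hnb).ne')

lemma exists_prime_lt_six_fifths_of_small {n : ℕ} (hn : 25 ≤ n) (hn' : n < 4214009) :
    ∃ q : ℕ, q.Prime ∧ n < q ∧ 5 * q < 6 * n := by
  have hchain : List.IsChain (fun p q ↦ q.Prime ∧ 5 * q < 6 * p) [25, 29, 31, 37, 43, 47, 53, 61,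
      73, 83, 97, 113, 131, 157, 181, 211, 251, 293, 349, 409, 487, 577, 691, 829, 991, 1187, 1423,
      1699, 2029, 2423, 2903, 3469, 4159, 4987, 5981, 7177, 8609, 10321, 12379, 14851, 17807, 21347,
      25609, 30727, 36871, 44221, 53051, 63659, 76387, 91639, 109961, 131947, 158329, 189989,
      227977, 273569, 328277, 393931, 472711, 567209, 680633, 816743, 980081, 1176089, 1411297,
      1693553, 2032253, 2438693, 2926421, 3511693, 4214009] := by
    simp only [List.isChain_cons_cons, List.isChain_singleton]
    norm_num
  obtain ⟨p, q, ⟨hq, hqp⟩, hpn, hnq⟩ :=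
    exists_rel_le_lt_of_isChain hchain hn (by simp : 4214009 ∈ _) hn'
  exact ⟨q, hq, hnq, by lia⟩

/-- Nagura's theorem. -/
theorem stmt_9_general {x : ℝ} (hx : 25 ≤ x) :
    ∃ q : ℕ, q.Prime ∧ x < q ∧ q < 6 / 5 * x := by
  rcases le_or_gt 4000000 x with hlarge | hsmall
  · exact exists_prime_lt_six_fifths_of_large hlarge
  have hfloor : (⌊x⌋₊ : ℝ) ≤ x := Nat.floor_le (by linarith)
  obtain ⟨q, hq, hnq, hqn⟩ := exists_prime_lt_six_fifths_of_small (n := ⌊x⌋₊)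
    (Nat.le_floor (by exact_mod_cast hx))
    ((Nat.floor_lt (by linarith)).2 (by push_cast; linarith))
  have hqn' : (5 : ℝ) * q < 6 * ⌊x⌋₊ := by exact_mod_cast hqn
  exact ⟨q, hq, (Nat.floor_lt' hq.ne_zero).1 hnq, by linarith⟩

lemma twentyNine_le_nthPrime {j : ℕ} (hj : 10 ≤ j) : 29 ≤ nthPrime j := by
  have hcount : Nat.count Nat.Prime 29 = 9 := by decide
  calc 29 = Nat.nth Nat.Prime 9 := by rw [← hcount, Nat.nth_count (by norm_num)]
    _ ≤ nthPrime j := Nat.nth_monotone Nat.infinite_setOfPred_prime (by lia)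

lemma nthPrime_succ_le {j q : ℕ} (hq : q.Prime) (hjq : nthPrime j < q) : nthPrime (j + 1) ≤ q := by
  rcases j with - | j
  · exact hjq.le
  · by_contra! h
    exact (Nat.le_nth_of_lt_nth_succ h hq).not_gt hjq

lemma nthPrime_succ_sub_lt {j : ℕ} (hj : 25 ≤ nthPrime j) :
    (nthPrime (j + 1) : ℝ) - nthPrime j < 1 / 5 * nthPrime j := by
  obtain ⟨q, hq, hjq, hqj⟩ := stmt_9_general (x := nthPrime j) (by exact_mod_cast hj)
  have hle : (nthPrime (j + 1) : ℝ) ≤ q := by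
    exact_mod_cast nthPrime_succ_le hq (by exact_mod_cast hjq)
  linarith

end Nagura

/-- for `j ≥ 10` the prime gap satisfies `p_{j+1} - p_j < p_j / 5`;
equivalently, for every prime `p ≥ 29` there is a prime `q` with `p < q < (6/5)p`. -/
theorem stmt_9 :
    (∀ j : ℕ, 10 ≤ j →
      (nthPrime (j + 1) : ℝ) - nthPrime j < (1 / 5) * nthPrime j) ∧
    (∀ p : ℕ, Nat.Prime p → 29 ≤ p →
      ∃ q : ℕ, Nat.Prime q ∧ p < q ∧ (q : ℝ) < (6 / 5) * p) := by
  refine ⟨fun j hj ↦ nthPrime_succ_sub_lt (by linarith [twentyNine_le_nthPrime hj]),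
    fun p _ hp ↦ ?_⟩
  simpa only [Nat.cast_lt] using stmt_9_general (x := p) (Nat.ofNat_le_cast.2 (by linarith))

end Formal
end
end

section
/- Let p be an odd prime and t ≥ 2357 an integer with 0 < p − t < (5/(2√6) − 1)·√t, and let d be an integer with t ≤ d ≤ p. Let R be a (p+1)-regular finite simple graph with an even number of vertices and λ(R) ≤ 2√p. Then R contains p − d pairwise edge-disjoint perfect matchings, and the graph H obtained from R by deleting the edges of these p − d perfect matchings is (d+1)-regular and satisfies λ(H) ≤ (5/√6)·√d and girth(H) ≥ girth(R). -/
open Classical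

noncomputable section

namespace Formal

variable {V : Type*} [Fintype V] [DecidableEq V]

/-!
On the functions orthogonal to the constants the adjacency operator of `R` has norm at most `2√p`.
Deleting a perfect matching subtracts an operator of norm at most `1`, so this bound grows by at
most `1` while the degree drops by `1`.

A `k`-regular graph whose bound is at most `k - 2` has at least `k` edges across every cut: a side
with at most `k` vertices cannot absorb the degrees of its own vertices, and if both sides have at
least `k` vertices, the Poincaré inequality applies to the projected indicator of a side. Counting
the edges between a set `U` and the odd components of its complement then gives Tutte's condition,
hence a perfect matching. After `p - d` deletions the bound is `2√p + (p - d)`, which is at most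
`2√d + 2(p - d) ≤ (5/√6)√d` because `√p ≤ √d + (p - d)/2`.
-/

open Matrix Finset

section SortedList

variable {α : Type*} [LinearOrder α]

lemma getElem_le_iff_countP_add_lt_length {l : List α} (hl : l.Pairwise (· ≤ ·)) (c : α) {i : ℕ}
    (hi : i < l.length) : l[i] ≤ c ↔ l.countP (c < ·) + i < l.length := by
  induction l generalizing i with
  | nil => simp at hi
  | cons a l ih =>
    obtain ⟨ha, hl⟩ := List.pairwise_cons.mp hl
    have hcount : l.countP (c < ·) ≤ l.length := List.countP_le_length
    by_cases hac : c < a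
    · have hall : l.countP (c < ·) = l.length :=
        List.countP_eq_length.mpr fun b hb => by simpa using hac.trans_le (ha b hb)
      have hlt : c < (a :: l)[i] := by
        cases i with
        | zero => exact hac
        | succ i => exact hac.trans_le (ha _ (List.getElem_mem _))
      simp only [hlt.not_ge, List.countP_cons, hall, hac, decide_true, if_true, List.length_cons,
        false_iff]
      lia
    · cases i with
      | zero =>
        simp only [List.getElem_cons_zero, not_lt.mp hac, List.countP_cons, hac, decide_false,
          List.length_cons, true_iff]
        lia
      | succ i =>
        have := ih hl (i := i) (by simpa using hi)
        simp only [List.getElem_cons_succ, List.countP_cons, hac, decide_false, List.length_cons,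
          this, Bool.false_eq_true, if_false]
        lia

end SortedList

section DiagonalOperator

variable {ι 𝕜 E : Type*} [Fintype ι] [RCLike 𝕜] [NormedAddCommGroup E] [InnerProductSpace 𝕜 E]
  {b : OrthonormalBasis ι 𝕜 E} {ev : ι → 𝕜} {T : E →ₗ[𝕜] E} {μ : ℝ}

lemma inner_basis_apply_of_diagonal (hT : ∀ i, T (b i) = ev i • b i) (x : E) (i : ι) :
    inner 𝕜 (b i) (T x) = ev i * inner 𝕜 (b i) x := by
  conv_lhs => rw [← b.sum_repr' x]
  simp [hT, inner_sum, inner_smul_right, orthonormal_iff_ite.mp b.orthonormal, mul_comm]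

lemma norm_sq_apply_of_diagonal (hT : ∀ i, T (b i) = ev i • b i) (x : E) :
    ‖T x‖ ^ 2 = ∑ i, ‖ev i‖ ^ 2 * ‖inner 𝕜 (b i) x‖ ^ 2 := by
  simp only [← b.sum_sq_norm_inner_right, inner_basis_apply_of_diagonal hT, norm_mul, mul_pow]

lemma card_lt_norm_le_one_of_forall_ker (hT : ∀ i, T (b i) = ev i • b i) (φ : E →ₗ[𝕜] 𝕜)
    (hφ : ∀ x, φ x = 0 → ‖T x‖ ≤ μ * ‖x‖) : #{i | μ < ‖ev i‖} ≤ 1 := by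
  refine card_le_one.mpr fun i hi j hj => by_contra fun hij => ?_
  simp only [mem_filter_univ] at hi hj
  have hφi : φ (b i) ≠ 0 := fun h => hi.not_ge <| by simpa [hT, norm_smul] using hφ (b i) h
  -- Two large eigendirections span a plane, which meets the hyperplane `φ = 0`.
  set y := φ (b j) • b i - φ (b i) • b j with hy
  have hbi (l : ι) : inner 𝕜 (b l) y =
      (if l = i then φ (b j) else 0) - if l = j then φ (b i) else 0 := by
    simp [hy, inner_sub_right, inner_smul_right, orthonormal_iff_ite.mp b.orthonormal]
  have hy0 : 0 < ‖y‖ := by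
    refine norm_pos_iff.mpr fun h => hφi ?_
    simpa [h, Ne.symm hij] using hbi j
  have hTy : ‖T y‖ ≤ μ * ‖y‖ := hφ y (by simp [hy, mul_comm])
  have hμ : 0 ≤ μ := nonneg_of_mul_nonneg_left ((norm_nonneg _).trans hTy) hy0
  have hlt : μ ^ 2 * ‖y‖ ^ 2 < ‖T y‖ ^ 2 := by
    rw [norm_sq_apply_of_diagonal hT, ← b.sum_sq_norm_inner_right, mul_sum]
    refine sum_lt_sum (fun l _ => ?_) ⟨j, mem_univ j, ?_⟩
    · rcases eq_or_ne l i with rfl | hli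
      · gcongr
      · rcases eq_or_ne l j with rfl | hlj
        · gcongr
        · simp [hbi, hli, hlj]
    · have : 0 < ‖inner 𝕜 (b j) y‖ := by simpa [hbi, Ne.symm hij] using hφi
      gcongr
  nlinarith [pow_le_pow_left₀ (norm_nonneg _) hTy 2]

lemma norm_apply_le_of_card_lt_norm_le_one (hT : ∀ i, T (b i) = ev i • b i) (hμ : 0 ≤ μ)
    (hcard : #{i | μ < ‖ev i‖} ≤ 1) {e : E} {κ : 𝕜} (he : e ≠ 0) (hTe : T e = κ • e)
    (hκ : μ < ‖κ‖) {x : E} (hx : inner 𝕜 e x = 0) : ‖T x‖ ≤ μ * ‖x‖ := by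
  have heigen (i : ι) (hi : inner 𝕜 (b i) e ≠ 0) : ev i = κ := by
    have := inner_basis_apply_of_diagonal hT e i
    rw [hTe, inner_smul_right] at this
    exact (mul_right_cancel₀ hi this).symm
  obtain ⟨i₀, hi₀⟩ : ∃ i, inner 𝕜 (b i) e ≠ 0 := by
    by_contra! h
    exact he (by rw [← b.sum_repr' e, sum_eq_zero fun i _ => by rw [h i, zero_smul]])
  have hunique (i : ι) (hi : μ < ‖ev i‖) : i = i₀ :=
    card_le_one.mp hcard i (by simpa) i₀ (by simpa [heigen i₀ hi₀] using hκ)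
  have hxi₀ : inner 𝕜 (b i₀) x = 0 := by
    have hsum := b.sum_inner_mul_inner e x
    rw [hx, sum_eq_single i₀ (fun i _ hne => ?_) (by simp), mul_eq_zero] at hsum
    · exact hsum.resolve_left fun h => hi₀ (inner_eq_zero_symm.mp h)
    · have : inner 𝕜 (b i) e = 0 := by_contra fun h => hne (hunique i (heigen i h ▸ hκ))
      rw [inner_eq_zero_symm.mp this, zero_mul]
  refine le_of_sq_le_sq ?_ (by positivity)
  rw [mul_pow, norm_sq_apply_of_diagonal hT, ← b.sum_sq_norm_inner_right, mul_sum]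
  refine sum_le_sum fun i _ => ?_
  rcases le_or_gt ‖ev i‖ μ with hi | hi
  · gcongr
  · simp [hunique i hi, hxi₀]

end DiagonalOperator

section Spectrum

lemma secondLargestAbsEig_le_iff {V : Type*} [Fintype V] [DecidableEq V] {G : SimpleGraph V}
    {μ : ℝ} (hV : Fintype.card V ≠ 1) (hμ : 0 ≤ μ) :
    secondLargestAbsEig G ≤ μ ↔ #{i | μ < |eigs G i|} ≤ 1 := by
  have hlen : (sortedAbsEigs G).length = Fintype.card V := by simp [sortedAbsEigs]
  have hcount : (sortedAbsEigs G).countP (μ < ·) = #{i | μ < |eigs G i|} := by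
    rw [sortedAbsEigs, ← Multiset.coe_countP, Multiset.sort_eq, Multiset.countP_map]
    rfl
  rw [← hcount, secondLargestAbsEig]
  rcases lt_or_ge (Fintype.card V - 2) (Fintype.card V) with hlt | hle
  · rw [List.getD_eq_getElem _ _ (hlen ▸ hlt),
      getElem_le_iff_countP_add_lt_length (l := sortedAbsEigs G) (Multiset.pairwise_sort _ _), hlen]
    lia
  · have hnil : sortedAbsEigs G = [] := List.eq_nil_of_length_eq_zero (by lia)
    simp [hnil, hμ]

variable {V : Type*} [Fintype V] {G : SimpleGraph V} {k : ℕ} {μ : ℝ}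

lemma adjMat_eq_adjMatrix {V : Type*} (G : SimpleGraph V) [DecidableRel G.Adj] :
    adjMat G = G.adjMatrix ℝ := by
  unfold adjMat
  congr!

lemma isRegular_iff_degree_eq : IsRegular G k ↔ ∀ v, G.degree v = k := by
  refine forall_congr' fun v => ?_
  rw [← G.card_neighborSet_eq_degree, Set.ncard_eq_toFinset_card', Set.toFinset_card]

lemma IsRegular.degree_eq (h : IsRegular G k) (v : V) : G.degree v = k :=
  isRegular_iff_degree_eq.mp h v

/-- The adjacency operator of `G` on the Euclidean space of real functions on the vertices. -/
def adjOp (G : SimpleGraph V) : EuclideanSpace ℝ V →ₗ[ℝ] EuclideanSpace ℝ V :=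
  toEuclideanLin (adjMat G)

/-- The adjacency operator has norm at most `μ` on the vectors orthogonal to the constants.
For a regular graph this is an operator form of `secondLargestAbsEig G ≤ μ`. -/
def SpectralBound (G : SimpleGraph V) (μ : ℝ) : Prop :=
  ∀ x : EuclideanSpace ℝ V, ∑ v, x v = 0 → ‖adjOp G x‖ ≤ μ * ‖x‖

lemma adjOp_eq_toLp_mulVec (G : SimpleGraph V) (x : EuclideanSpace ℝ V) :
    adjOp G x = WithLp.toLp 2 (adjMat G *ᵥ x) :=
  toLpLin_apply ..

lemma adjOp_apply (G : SimpleGraph V) (x : EuclideanSpace ℝ V) (v : V) :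
    adjOp G x v = ∑ w ∈ G.neighborFinset v, x w := by
  simp [adjOp, adjMat_eq_adjMatrix]

lemma adjOp_eigenvectorBasis [DecidableEq V] (G : SimpleGraph V) (i : V) :
    adjOp G ((adjMat_isHermitian G).eigenvectorBasis i) =
      eigs G i • (adjMat_isHermitian G).eigenvectorBasis i := by
  rw [adjOp_eq_toLp_mulVec, (adjMat_isHermitian G).mulVec_eigenvectorBasis]
  rfl

lemma IsRegular.adjOp_one (h : IsRegular G k) :
    adjOp G (WithLp.toLp 2 1) = (k : ℝ) • WithLp.toLp 2 1 := by
  ext v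
  simp [adjOp_apply, h.degree_eq v]

lemma IsRegular.spectralBound [DecidableEq V] (h : IsRegular G k) (hV : Fintype.card V ≠ 1)
    (hG : secondLargestAbsEig G ≤ μ) (hμ : 0 ≤ μ) (hμk : μ < k) : SpectralBound G μ := by
  intro x hx
  rcases isEmpty_or_nonempty V with _ | _
  · simp [Subsingleton.elim x 0]
  have hone : (WithLp.toLp 2 1 : EuclideanSpace ℝ V) ≠ 0 := by simp
  refine norm_apply_le_of_card_lt_norm_le_one (adjOp_eigenvectorBasis G) hμ
    ((secondLargestAbsEig_le_iff hV hμ).mp hG) hone h.adjOp_one (by simpa using hμk) ?_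
  simpa [PiLp.inner_apply] using hx

lemma SpectralBound.secondLargestAbsEig_le [DecidableEq V] (h : SpectralBound G μ)
    (hV : Fintype.card V ≠ 1) (hμ : 0 ≤ μ) : secondLargestAbsEig G ≤ μ := by
  refine (secondLargestAbsEig_le_iff hV hμ).mpr <|
    card_lt_norm_le_one_of_forall_ker (adjOp_eigenvectorBasis G)
      (∑ v, (EuclideanSpace.proj v : EuclideanSpace ℝ V →L[ℝ] ℝ).toLinearMap) fun x hx =>
      h x (by simpa using hx)

end Spectrum

section EdgeCut

variable {V : Type*} [Fintype V] {G : SimpleGraph V} {k : ℕ} {μ : ℝ}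

lemma IsRegular.inner_adjOp_eq (h : IsRegular G k) (x : EuclideanSpace ℝ V) :
    inner ℝ x (adjOp G x) =
      k * ‖x‖ ^ 2 - (∑ v, ∑ w, if G.Adj v w then (x v - x w) ^ 2 else 0) / 2 := by
  rw [← G.lapMatrix_toLinearMap₂' ℝ x.ofLp, toLinearMap₂'_apply', SimpleGraph.lapMatrix, sub_mulVec,
    dotProduct_sub, SimpleGraph.dotProduct_mulVec_degMatrix, ← adjMat_eq_adjMatrix,
    adjOp_eq_toLp_mulVec, EuclideanSpace.real_norm_sq_eq, EuclideanSpace.inner_eq_star_dotProduct,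
    mul_sum]
  simp [h.degree_eq, dotProduct_comm, mul_assoc, pow_two]

lemma SpectralBound.poincare (hμ : SpectralBound G μ) (h : IsRegular G k)
    {x : EuclideanSpace ℝ V} (hx : ∑ v, x v = 0) :
    (k - μ) * ‖x‖ ^ 2 ≤ (∑ v, ∑ w, if G.Adj v w then (x v - x w) ^ 2 else 0) / 2 := by
  have hinner : inner ℝ x (adjOp G x) ≤ μ * ‖x‖ ^ 2 :=
    calc inner ℝ x (adjOp G x) ≤ ‖x‖ * ‖adjOp G x‖ := real_inner_le_norm _ _
      _ ≤ ‖x‖ * (μ * ‖x‖) := by gcongr; exact hμ x hx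
      _ = μ * ‖x‖ ^ 2 := by ring
  linarith [h.inner_adjOp_eq x]

lemma card_interedges_compl_compl (G : SimpleGraph V) (S : Finset V) :
    #(G.interedges Sᶜ Sᶜᶜ) = #(G.interedges S Sᶜ) := by
  have := G.symm
  rw [compl_compl]
  exact Rel.card_interedges_comm ..

lemma sum_sq_sub_indicator (G : SimpleGraph V) (S : Finset V) (a : ℝ) :
    (∑ v, ∑ w, if G.Adj v w then
      ((if v ∈ S then a else 0) - if w ∈ S then a else 0) ^ 2 else 0) / 2 =
      a ^ 2 * #(G.interedges S Sᶜ) := by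
  have hcut (T : Finset V) : (#(G.interedges T Tᶜ) : ℝ) =
      ∑ v, ∑ w, if v ∈ T ∧ w ∉ T ∧ G.Adj v w then 1 else 0 := by
    rw [← Fintype.sum_prod_type', sum_boole]
    congr 2
    ext
    simp [SimpleGraph.mem_interedges_iff]
  have hsum : a ^ 2 * #(G.interedges S Sᶜ) + a ^ 2 * #(G.interedges Sᶜ Sᶜᶜ) =
      ∑ v, ∑ w, if G.Adj v w then
        ((if v ∈ S then a else 0) - if w ∈ S then a else 0) ^ 2 else 0 := by
    simp only [hcut, mul_sum, ← sum_add_distrib]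
    refine sum_congr rfl fun v _ => sum_congr rfl fun w _ => ?_
    by_cases hv : v ∈ S <;> by_cases hw : w ∈ S <;> simp [hv, hw]
  rw [← hsum, card_interedges_compl_compl]
  ring

lemma SpectralBound.mul_card_le_card_interedges (hμ : SpectralBound G μ) (h : IsRegular G k)
    (S : Finset V) :
    (k - μ) * (#S * #Sᶜ) ≤ (#S + #Sᶜ) * #(G.interedges S Sᶜ) := by
  rcases S.eq_empty_or_nonempty with rfl | hS
  · simp
  have : 0 < (#S : ℝ) := by exact_mod_cast hS.card_pos
  set s : ℝ := (#S : ℝ) with hs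
  set n : ℝ := s + #Sᶜ with hn
  have hcard : (Fintype.card V : ℝ) = n := by
    rw [← S.card_add_card_compl]
    push_cast
    rfl
  -- The orthogonal projection of the indicator of `S` onto the mean-zero functions, times `n`.
  set x : EuclideanSpace ℝ V := WithLp.toLp 2 fun v => (if v ∈ S then n else 0) - s with hx
  have hx0 : ∑ v, x v = 0 := by simp [hx, hcard, ← hs, mul_comm]
  have hxnorm : ‖x‖ ^ 2 = n * (s * #Sᶜ) := by
    simp only [EuclideanSpace.real_norm_sq_eq, hx, sub_sq, ite_pow, sum_add_distrib,
      sum_sub_distrib, mul_ite, ite_mul]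
    simp only [hn, ne_eq, OfNat.ofNat_ne_zero, not_false_eq_true, zero_pow, sum_ite_mem, univ_inter,
      sum_const, nsmul_eq_mul, ← hs, mul_zero, zero_mul, card_univ, hcard]
    ring
  have hpoincare := hμ.poincare h hx0
  simp only [hx, sub_sub_sub_cancel_right] at hpoincare
  rw [← hx, hxnorm, sum_sq_sub_indicator] at hpoincare
  exact le_of_mul_le_mul_left (by linarith) (by positivity : 0 < n)

lemma card_interedges_eq_sum (G : SimpleGraph V) (S T : Finset V) :
    #(G.interedges S T) = ∑ v ∈ S, #(G.neighborFinset v ∩ T) := by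
  simp only [SimpleGraph.interedges_def, card_filter, sum_product]
  refine sum_congr rfl fun v _ => ?_
  rw [← card_filter]
  congr 1
  ext
  simp [and_comm]

lemma le_card_interedges_compl_of_card_le {S : Finset V} (hS : S.Nonempty)
    (hSk : #S ≤ k) (hdeg : ∀ v ∈ S, k ≤ G.degree v) : k ≤ #(G.interedges S Sᶜ) := by
  have hout (v : V) (hv : v ∈ S) : k + 1 - #S ≤ #(G.neighborFinset v ∩ Sᶜ) := by
    have hin : G.neighborFinset v \ Sᶜ ⊆ S.erase v := fun w hw => by
      simp only [mem_sdiff, SimpleGraph.mem_neighborFinset, mem_compl, not_not] at hw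
      exact mem_erase.mpr ⟨hw.1.ne', hw.2⟩
    have hin := card_le_card hin
    rw [card_erase_of_mem hv] at hin
    have hsplit := card_sdiff_add_card_inter (G.neighborFinset v) Sᶜ
    rw [G.card_neighborFinset_eq_degree] at hsplit
    have := hdeg v hv
    have := card_pos.mpr hS
    lia
  obtain ⟨c, rfl⟩ := Nat.exists_eq_add_of_le hSk
  calc #S + c ≤ #S * (#S + c + 1 - #S) := by
        rw [add_assoc, Nat.add_sub_cancel_left]
        nlinarith [hS.card_pos]
    _ = ∑ _v ∈ S, (#S + c + 1 - #S) := by simp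
    _ ≤ ∑ v ∈ S, #(G.neighborFinset v ∩ Sᶜ) := sum_le_sum hout
    _ = #(G.interedges S Sᶜ) := (card_interedges_eq_sum ..).symm

lemma SpectralBound.le_card_interedges_compl (hμ : SpectralBound G μ) (h : IsRegular G k)
    (hk : μ + 2 ≤ k) {S : Finset V} (hS : S.Nonempty) (hS' : Sᶜ.Nonempty) :
    k ≤ #(G.interedges S Sᶜ) := by
  rcases le_total #S k with hle | hle
  · exact le_card_interedges_compl_of_card_le hS hle fun v _ => (h.degree_eq v).ge
  rcases le_total #Sᶜ k with hle' | hle'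
  · rw [← card_interedges_compl_compl]
    exact le_card_interedges_compl_of_card_le hS' hle' fun v _ => (h.degree_eq v).ge
  have hmul := hμ.mul_card_le_card_interedges h S
  have : (0 : ℝ) < #S := by exact_mod_cast hS.card_pos
  have hle : (k : ℝ) ≤ #S := by exact_mod_cast hle
  have hle' : (k : ℝ) ≤ #Sᶜ := by exact_mod_cast hle'
  suffices (k : ℝ) ≤ #(G.interedges S Sᶜ) by exact_mod_cast this
  refine le_of_mul_le_mul_left ?_ (by positivity : (0 : ℝ) < #S + #Sᶜ)
  calc ((#S + #Sᶜ) * k : ℝ) ≤ 2 * (#S * #Sᶜ) := by nlinarith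
    _ ≤ (k - μ) * (#S * #Sᶜ) := by gcongr; linarith
    _ ≤ _ := hmul

end EdgeCut

section Tutte

variable {V : Type*} [Fintype V] {G : SimpleGraph V} {k : ℕ}

lemma interedges_supp_compl_subset {U : Set V}
    (C : ((⊤ : G.Subgraph).deleteVerts U).coe.ConnectedComponent) :
    let T := (Subtype.val '' C.supp).toFinset
    G.interedges T Tᶜ ⊆ G.interedges T U.toFinset := by
  rintro T ⟨v, w⟩ hvw
  simp only [SimpleGraph.mk_mem_interedges_iff, T, Set.mem_toFinset, mem_compl] at hvw ⊢
  obtain ⟨⟨v, hv, rfl⟩, hw, hadj⟩ := hvw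
  refine ⟨⟨v, hv, rfl⟩, by_contra fun hwU => hw ?_, hadj⟩
  have hvU : (v : V) ∉ U := by simpa using v.2
  refine ⟨⟨w, by simpa using hwU⟩, C.mem_supp_of_adj_mem_supp hv ?_, rfl⟩
  simp [hadj, hvU, hwU]

lemma exists_isPerfectMatching_of_le_card_interedges_compl (hk : 0 < k)
    (hdeg : ∀ v, G.degree v ≤ k) (hcut : ∀ S : Finset V, Odd #S → k ≤ #(G.interedges S Sᶜ)) :
    ∃ M : G.Subgraph, M.IsPerfectMatching := by
  refine SimpleGraph.tutte.mpr fun U hU => hU.not_ge ?_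
  set O := ((⊤ : G.Subgraph).deleteVerts U).coe.oddComponents.toFinset
  let T (C : ((⊤ : G.Subgraph).deleteVerts U).coe.ConnectedComponent) : Finset V :=
    (Subtype.val '' C.supp).toFinset
  have hT (C) (hC : C ∈ O) : k ≤ #(G.interedges U.toFinset (T C)) := by
    have hodd : Odd #(T C) := by
      rw [← Set.ncard_eq_toFinset_card', Set.ncard_image_of_injective _ Subtype.val_injective]
      simpa [O, SimpleGraph.oddComponents] using hC
    have := G.symm
    calc k ≤ #(G.interedges (T C) (T C)ᶜ) := hcut _ hodd
      _ ≤ #(G.interedges (T C) U.toFinset) := card_le_card (interedges_supp_compl_subset C)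
      _ = #(G.interedges U.toFinset (T C)) := Rel.card_interedges_comm ..
  have hdisj : (O : Set _).PairwiseDisjoint fun C => G.interedges U.toFinset (T C) := by
    refine fun C _ C' _ hne => SimpleGraph.interedges_disjoint_right _ _ ?_
    rw [Set.disjoint_toFinset, Set.disjoint_image_iff Subtype.val_injective]
    exact SimpleGraph.pairwise_disjoint_supp_connectedComponent _ hne
  have hmul : #O * k ≤ #U.toFinset * k :=
    calc #O * k = ∑ _C ∈ O, k := by simp
      _ ≤ ∑ C ∈ O, #(G.interedges U.toFinset (T C)) := sum_le_sum hT
      _ = #(O.biUnion fun C => G.interedges U.toFinset (T C)) := (card_biUnion hdisj).symm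
      _ ≤ #(G.interedges U.toFinset univ) := card_le_card <| biUnion_subset.mpr fun C _ =>
          SimpleGraph.interedges_mono _ Subset.rfl (subset_univ _)
      _ ≤ ∑ _v ∈ U.toFinset, k := by
          rw [card_interedges_eq_sum]
          exact sum_le_sum fun v _ => by simpa using hdeg v
      _ = #U.toFinset * k := by simp
  rw [Set.ncard_eq_toFinset_card', Set.ncard_eq_toFinset_card']
  exact Nat.le_of_mul_le_mul_right hmul hk

lemma SpectralBound.exists_isPerfectMatching {μ : ℝ} (hμ : SpectralBound G μ)
    (h : IsRegular G k) (hk0 : 0 < k) (hk : μ + 2 ≤ k) (heven : Even (Fintype.card V)) :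
    ∃ M : G.Subgraph, M.IsPerfectMatching := by
  refine exists_isPerfectMatching_of_le_card_interedges_compl hk0 (fun v => (h.degree_eq v).le)
    fun S hS => hμ.le_card_interedges_compl h hk (card_pos.mp hS.pos) ?_
  refine nonempty_iff_ne_empty.mpr fun hempty => Nat.not_even_iff_odd.mpr hS ?_
  rwa [(compl_eq_empty_iff S).mp hempty, card_univ]

end Tutte

section DeleteRegularSubgraph

variable {V : Type*} [Fintype V] {G F : SimpleGraph V} {k r : ℕ}

lemma IsRegular.norm_adjOp_le (h : IsRegular F r) (x : EuclideanSpace ℝ V) :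
    ‖adjOp F x‖ ≤ r * ‖x‖ := by
  refine le_of_sq_le_sq ?_ (by positivity)
  calc ‖adjOp F x‖ ^ 2 = ∑ v, (∑ w ∈ F.neighborFinset v, x w) ^ 2 := by
        simp only [EuclideanSpace.real_norm_sq_eq, adjOp_apply]
    _ ≤ ∑ v, r * ∑ w ∈ F.neighborFinset v, x w ^ 2 := by
        refine sum_le_sum fun v _ => sq_sum_le_card_mul_sum_sq.trans_eq ?_
        rw [F.card_neighborFinset_eq_degree, h.degree_eq]
    _ = r * ∑ w, ∑ v ∈ F.neighborFinset w, x w ^ 2 := by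
        rw [← mul_sum, sum_comm' (t' := univ) (s' := fun w => F.neighborFinset w)]
        simp [F.adj_comm]
    _ = (r * ‖x‖) ^ 2 := by
        simp only [sum_const, F.card_neighborFinset_eq_degree, h.degree_eq, nsmul_eq_mul,
          ← mul_sum, EuclideanSpace.real_norm_sq_eq, mul_pow]
        ring

lemma adjOp_sdiff (hF : F ≤ G) : adjOp (G \ F) = adjOp G - adjOp F := by
  have hsub (v : V) : F.neighborFinset v ⊆ G.neighborFinset v := fun w hw => by
    simpa using hF (by simpa using hw)
  ext x v
  simp [adjOp_apply, sum_sdiff_eq_sub (hsub v)]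

lemma SpectralBound.sdiff {μ : ℝ} (hμ : SpectralBound G μ) (hF : F ≤ G) (h : IsRegular F r) :
    SpectralBound (G \ F) (μ + r) := by
  intro x hx
  calc ‖adjOp (G \ F) x‖ = ‖adjOp G x - adjOp F x‖ := by rw [adjOp_sdiff hF, LinearMap.sub_apply]
    _ ≤ ‖adjOp G x‖ + ‖adjOp F x‖ := norm_sub_le _ _
    _ ≤ μ * ‖x‖ + r * ‖x‖ := add_le_add (hμ x hx) (h.norm_adjOp_le x)
    _ = (μ + r) * ‖x‖ := by ring

lemma IsRegular.sdiff {V : Type*} [Finite V] {G F : SimpleGraph V} (hG : IsRegular G (k + r))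
    (hF : F ≤ G) (h : IsRegular F r) : IsRegular (G \ F) k := by
  intro v
  have hset : (G \ F).neighborSet v = G.neighborSet v \ F.neighborSet v := rfl
  have hsub : F.neighborSet v ⊆ G.neighborSet v := fun w hw => hF hw
  rw [hset, Set.ncard_sdiff hsub, hG v, h v, Nat.add_sub_cancel]

lemma isRegular_one_spanningCoe {V : Type*} {G : SimpleGraph V} {M : G.Subgraph}
    (hM : M.IsPerfectMatching) : IsRegular M.spanningCoe 1 := by
  intro v
  obtain ⟨w, hw, hunique⟩ := SimpleGraph.Subgraph.isPerfectMatching_iff.mp hM v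
  exact Set.ncard_eq_one.mpr ⟨w, Set.eq_singleton_iff_unique_mem.mpr ⟨hw, hunique⟩⟩

lemma deleteEdges_edgeSet_eq_sdiff_spanningCoe {V : Type*} {G : SimpleGraph V}
    (M : G.Subgraph) : G.deleteEdges M.edgeSet = G \ M.spanningCoe := by
  rw [← M.edgeSet_spanningCoe, SimpleGraph.deleteEdges_edgeSet]

lemma IsRegular.deleteEdges_edgeSet {V : Type*} [Finite V] {G : SimpleGraph V} {M : G.Subgraph}
    (hG : IsRegular G (k + 1)) (hM : M.IsPerfectMatching) :
    IsRegular (G.deleteEdges M.edgeSet) k :=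
  deleteEdges_edgeSet_eq_sdiff_spanningCoe M ▸
    hG.sdiff M.spanningCoe_le (isRegular_one_spanningCoe hM)

lemma SpectralBound.deleteEdges_edgeSet {μ : ℝ} {M : G.Subgraph} (hμ : SpectralBound G μ)
    (hM : M.IsPerfectMatching) : SpectralBound (G.deleteEdges M.edgeSet) (μ + 1) := by
  rw [deleteEdges_edgeSet_eq_sdiff_spanningCoe]
  exact mod_cast hμ.sdiff M.spanningCoe_le (isRegular_one_spanningCoe hM)

end DeleteRegularSubgraph

section DisjointPerfectMatchings

lemma exists_isPerfectMatching_edgeSet_eq_of_le {V : Type*} {R H : SimpleGraph V} (hHR : H ≤ R)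
    {M : H.Subgraph} (hM : M.IsPerfectMatching) :
    ∃ N : R.Subgraph, N.IsPerfectMatching ∧ N.edgeSet = M.edgeSet := by
  refine ⟨R.toSubgraph M.spanningCoe (M.spanningCoe_le.trans hHR),
    (SimpleGraph.Subgraph.IsPerfectMatching.toSubgraph_iff _).mpr hM, ?_⟩
  ext e
  induction e with | _ v w => simp

lemma exists_disjoint_perfectMatchings {V : Type*} [Fintype V] {R : SimpleGraph V} {k m : ℕ}
    {μ : ℝ} (hμ : SpectralBound R μ) (hR : IsRegular R (k + m)) (hk : μ + m ≤ k)
    (heven : Even (Fintype.card V)) :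
    ∃ Ms : Fin m → R.Subgraph,
      (∀ i, (Ms i).IsPerfectMatching) ∧
      (∀ i j, i ≠ j → Disjoint (Ms i).edgeSet (Ms j).edgeSet) ∧
      IsRegular (R.deleteEdges (⋃ i, (Ms i).edgeSet)) k ∧
      SpectralBound (R.deleteEdges (⋃ i, (Ms i).edgeSet)) (μ + m) := by
  induction m generalizing R μ with
  | zero => exact ⟨Fin.elim0, by simp, by simp, by simpa using hR, by simpa using hμ⟩
  | succ m ih =>
    push_cast at hk
    obtain ⟨M, hM⟩ := hμ.exists_isPerfectMatching hR (by lia) (by push_cast; linarith) heven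
    set R' := R.deleteEdges M.edgeSet with hR'
    obtain ⟨Ms', hMs', hdisj, hreg, hspec⟩ :=
      ih (hμ.deleteEdges_edgeSet hM) (IsRegular.deleteEdges_edgeSet hR hM) (by linarith)
    choose Ms hMs hedges using fun i =>
      exists_isPerfectMatching_edgeSet_eq_of_le (R.deleteEdges_le M.edgeSet) (hMs' i)
    simp only [← hedges] at hdisj hreg hspec
    have hdisjM (i : Fin m) : Disjoint M.edgeSet (Ms i).edgeSet := by
      refine Set.disjoint_of_subset_right (hedges i ▸ (Ms' i).edgeSet_subset) ?_
      rw [SimpleGraph.edgeSet_deleteEdges]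
      exact Set.disjoint_sdiff_right
    have hdelete : R.deleteEdges (⋃ i, (Fin.cons (α := fun _ => R.Subgraph) M Ms i).edgeSet) =
        R'.deleteEdges (⋃ i, (Ms i).edgeSet) := by
      rw [hR', SimpleGraph.deleteEdges_deleteEdges]
      congr 1
      ext e
      simp [Fin.exists_fin_succ]
    refine ⟨Fin.cons M Ms, ?_, ?_, hdelete ▸ hreg, ?_⟩
    · simp [Fin.forall_fin_succ, hM, hMs]
    · simpa [Fin.forall_fin_succ, hdisjM, fun i => (hdisjM i).symm] using hdisj
    · rw [hdelete, Nat.cast_succ, add_comm (m : ℝ), ← add_assoc]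
      exact hspec

end DisjointPerfectMatchings

section Girth

variable {V : Type*} [Fintype V] {G H : SimpleGraph V}

lemma not_isAcyclic_of_two_le_degree [Nonempty V] (hdeg : ∀ v, 2 ≤ G.degree v) :
    ¬ G.IsAcyclic := by
  intro hG
  obtain ⟨T, hGT, -, hT⟩ :=
    SimpleGraph.Connected.exists_isTree_le_of_le_of_isAcyclic SimpleGraph.connected_top le_top hG
  have hTdeg (v : V) : 2 ≤ T.degree v := (hdeg v).trans (SimpleGraph.degree_le_of_le hGT)
  obtain ⟨v₀⟩ := ‹Nonempty V›
  obtain ⟨w, hw⟩ := (T.degree_pos_iff_exists_adj v₀).mp (two_pos.trans_le (hTdeg v₀))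
  have : Nontrivial V := ⟨v₀, w, hw.ne⟩
  obtain ⟨v, hv⟩ := hT.exists_vert_degree_one_of_nontrivial
  have := hTdeg v
  lia

lemma girth_le_girth_of_le (hGH : G ≤ H) (hdeg : ∀ v, 2 ≤ G.degree v) : H.girth ≤ G.girth := by
  rcases isEmpty_or_nonempty V with _ | _
  · rw [Subsingleton.elim H G]
  · exact SimpleGraph.girth_anti hGH (not_isAcyclic_of_two_le_degree hdeg)

end Girth

section Numerics

lemma sqrt_le_sqrt_add_half_sub {x y : ℝ} (hx : 1 ≤ x) (hxy : x ≤ y) :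
    √y ≤ √x + (y - x) / 2 := by
  have hx1 : 1 ≤ √x := Real.one_le_sqrt.mpr hx
  refine Real.sqrt_le_iff.mpr ⟨by linarith, ?_⟩
  nlinarith [Real.sq_sqrt (zero_le_one.trans hx)]

lemma two_mul_sqrt_add_sub_le {a x y : ℝ} (hx : 1 ≤ x) (hxy : x ≤ y)
    (hgap : y - x ≤ (a / 2 - 1) * √x) : 2 * √y + (y - x) ≤ a * √x := by
  linarith [sqrt_le_sqrt_add_half_sub hx hxy]

lemma sub_le_mul_sqrt_of_le {c t x y : ℝ} (hc : 0 ≤ c) (hgap : y - t ≤ c * √t) (htx : t ≤ x) :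
    y - x ≤ c * √x :=
  calc y - x ≤ y - t := by gcongr
    _ ≤ c * √t := hgap
    _ ≤ c * √x := by gcongr

lemma mul_sqrt_le_self {a x : ℝ} (hx : 0 ≤ x) (ha : a ≤ √x) : a * √x ≤ x :=
  calc a * √x ≤ √x * √x := by gcongr
    _ = x := Real.mul_self_sqrt hx

lemma two_le_five_div_sqrt_six : 2 ≤ 5 / √6 := by
  rw [le_div_iff₀ (by positivity), mul_comm, ← le_div_iff₀ two_pos]
  exact Real.sqrt_le_iff.mpr (by norm_num)

end Numerics

theorem stmt_15_general {V : Type*} [Fintype V] [DecidableEq V] (p d : ℕ) (a : ℝ) (hd : 0 < d)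
    (hdp : d ≤ p) (hgap : (p : ℝ) - d ≤ (a / 2 - 1) * √d) (had : a * √d < d + 1)
    (R : SimpleGraph V) (hreg : IsRegular R (p + 1)) (heven : Even (Fintype.card V))
    (hlam : secondLargestAbsEig R ≤ 2 * √p) :
    ∃ Ms : Fin (p - d) → R.Subgraph,
      (∀ i, (Ms i).IsPerfectMatching) ∧
      (∀ i j, i ≠ j → Disjoint (Ms i).edgeSet (Ms j).edgeSet) ∧
      IsRegular (R.deleteEdges (⋃ i, (Ms i).edgeSet)) (d + 1) ∧
      secondLargestAbsEig (R.deleteEdges (⋃ i, (Ms i).edgeSet)) ≤ a * √d ∧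
      R.girth ≤ (R.deleteEdges (⋃ i, (Ms i).edgeSet)).girth := by
  have hcard : Fintype.card V ≠ 1 := by grind
  have hcast : ((p - d : ℕ) : ℝ) = p - d := Nat.cast_sub hdp
  have hdp' : (d : ℝ) ≤ p := by exact_mod_cast hdp
  have hbound : 2 * √p + (p - d : ℕ) ≤ a * √d :=
    hcast ▸ two_mul_sqrt_add_sub_le (by exact_mod_cast hd) hdp' hgap
  have hspec : SpectralBound R (2 * √p) :=
    hreg.spectralBound hcard hlam (by positivity) (by push_cast; linarith)
  obtain ⟨Ms, hMs, hdisj, hregH, hspecH⟩ := exists_disjoint_perfectMatchings (k := d + 1)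
    (m := p - d) hspec (by rwa [show d + 1 + (p - d) = p + 1 by lia]) (by push_cast; linarith) heven
  exact ⟨Ms, hMs, hdisj, hregH, (hspecH.secondLargestAbsEig_le hcard (by positivity)).trans hbound,
    girth_le_girth_of_le (R.deleteEdges_le _) fun v => by rw [hregH.degree_eq]; lia⟩

/-- deleting `p - d` edge-disjoint perfect matchings from an LPS-type
`(p+1)`-regular expander yields a `(d+1)`-regular expander. -/
theorem stmt_15 {V : Type*} [Fintype V] [DecidableEq V]
    (p t : ℕ) (hp : Nat.Prime p) (hpodd : Odd p) (ht : 2357 ≤ t) (htp : t < p)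
    (hgap : (p : ℝ) - t < (5 / (2 * Real.sqrt 6) - 1) * Real.sqrt t)
    (d : ℕ) (hd₁ : t ≤ d) (hd₂ : d ≤ p)
    (R : SimpleGraph V) (hreg : IsRegular R (p + 1))
    (heven : Even (Fintype.card V))
    (hlam : secondLargestAbsEig R ≤ 2 * Real.sqrt p) :
    ∃ Ms : Fin (p - d) → R.Subgraph,
      (∀ i, (Ms i).IsPerfectMatching) ∧
      (∀ i j, i ≠ j → Disjoint (Ms i).edgeSet (Ms j).edgeSet) ∧
      IsRegular (R.deleteEdges (⋃ i, (Ms i).edgeSet)) (d + 1) ∧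
      secondLargestAbsEig (R.deleteEdges (⋃ i, (Ms i).edgeSet)) ≤
        (5 / Real.sqrt 6) * Real.sqrt d ∧
      R.girth ≤ (R.deleteEdges (⋃ i, (Ms i).edgeSet)).girth := by
  have htd : (t : ℝ) ≤ d := by exact_mod_cast hd₁
  have hd : (2357 : ℝ) ≤ d := by exact_mod_cast ht.trans hd₁
  have hcoeff : (5 : ℝ) / (2 * √6) = 5 / √6 / 2 := by rw [div_div, mul_comm]
  have hsqrt : 5 / √6 ≤ √d := Real.le_sqrt_of_sq_le <| by norm_num [div_pow]; linarith
  refine stmt_15_general p d (5 / √6) (by lia) hd₂ ?_ ?_ R hreg heven hlam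
  · exact sub_le_mul_sqrt_of_le (by linarith [two_le_five_div_sqrt_six]) (hcoeff ▸ hgap.le) htd
  · exact (mul_sqrt_le_self d.cast_nonneg hsqrt).trans_lt (lt_add_one _)

end Formal
end
end
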